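/- Let 0 < α < 1 and 0 < σ ≤ 1. Let f_𝔾(u) = (α·sin(πα)/((1−α)π))·u^{α−1}(1−u)^{α−1}/(u^{2α} − 2u^α(1−u)^α cos(πα) + (1−u)^{2α}) on (0,1), and let F_𝔾(y) = ∫₀^y f_𝔾(u) du be its cumulative distribution function. Define f_{α,σ}(x) = (x^{−σα/(1−α)−1}/π)·sin(πσ)·(1 − (1−x)^α)^{σ/(1−α)} for 0 < x ≤ 1, and f_{α,σ}(x) = (x^{−σα/(1−α)−1}/π)·sin(πσ·F_𝔾(1/x))·((x−1)^{2α} − 2(x−1)^α cos(πα) + 1)^{σ/(2(1−α))} for x > 1. Then f_{α,σ} is a probability density on (0,∞), and for every λ ≥ 0, ∫₀^∞ f_{α,σ}(x)·(1+λx)^{−1} dx = ((1+λ)^α − λ^α)^{σ/(1−α)}. (Proposition 5.2: f_{α,σ} is the density of the Dirichlet mean M₁(F_{Y_σ/𝔾_α}), characterized by its order-1 Cauchy–Stieltjes transform.) -/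

import Mathlib

open MeasureTheory

/-- The density of the BFRY random variable `𝔾_α` on (0,1). -/
noncomputable def bfryDensity (α : ℝ) : ℝ → ℝ := fun u =>
  α * Real.sin (Real.pi * α) / ((1 - α) * Real.pi) *
    (u ^ (α - 1) * (1 - u) ^ (α - 1) /
      (u ^ (2 * α) - 2 * u ^ α * (1 - u) ^ α * Real.cos (Real.pi * α) + (1 - u) ^ (2 * α)))

/-- The cumulative distribution function `F_𝔾(y) = ∫₀^y f_𝔾(u) du`. -/
noncomputable def bfryCDF (α : ℝ) : ℝ → ℝ := fun y => ∫ u in (0:ℝ)..y, bfryDensity α u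

/-- The density `f_{α,σ}` of the Dirichlet mean `M₁(F_{Y_σ/𝔾_α})` (Proposition 5.2). -/
noncomputable def bfryMeanDensity (α σ : ℝ) : ℝ → ℝ := fun x =>
  if x ≤ 1 then
    x ^ (-(σ * α / (1 - α)) - 1) / Real.pi * Real.sin (Real.pi * σ) *
      (1 - (1 - x) ^ α) ^ (σ / (1 - α))
  else
    x ^ (-(σ * α / (1 - α)) - 1) / Real.pi * Real.sin (Real.pi * σ * bfryCDF α (1 / x)) *
      ((x - 1) ^ (2 * α) - 2 * (x - 1) ^ α * Real.cos (Real.pi * α) + 1) ^ (σ / (2 * (1 - α)))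

/-!
Put `h z = (1 + z) ^ α - z ^ α` and `H = h ^ (σ / (1 - α))` on the closed upper half-plane. Adding a
positive real lowers arguments there, so `h` avoids the closed negative real axis and `H` is
continuous. As `H` tends to `0` at infinity and is real on the positive axis, integrating
`(H z - H l) / (z - l)` around the half-plane gives the Stieltjes representation
`H l = π⁻¹ * ∫ t in Ioi 0, -(H (-t)).im / (t + l)`.

The boundary values are explicit: the derivative of `t ↦ -arg (h (-t))` on `(0, 1)` is `π * (1 - α)`
times the density of `𝔾_α`, and `arg (h (-t)) = -π * (1 - α)` for `t ≥ 1`. Hence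
`f_{α,σ}(x) = -(H (-1 / x)).im / (π * x)`, which is nonnegative because `arg (h (-t))` lies in
`[-π * (1 - α), 0]`, and the substitution `t = 1 / x` turns the representation into the transform.
-/

open Bornology Complex Filter Set Topology
open scoped Real

lemma integral_exp_smul_comp_exp {E : Type*} [NormedAddCommGroup E] [NormedSpace ℝ E]
    (g : ℝ → E) : ∫ u, Real.exp u • g (Real.exp u) = ∫ t in Ioi 0, g t := by
  rw [← Real.range_exp, ← image_univ, integral_image_eq_integral_abs_deriv_smul MeasurableSet.univ
    (fun u _ => (Real.hasDerivAt_exp u).hasDerivWithinAt) Real.exp_injective.injOn]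
  simp only [Measure.restrict_univ, abs_of_pos (Real.exp_pos _)]

lemma integral_inv_sq_smul_comp_inv_Ioi {E : Type*} [NormedAddCommGroup E] [NormedSpace ℝ E]
    (g : ℝ → E) : ∫ x in Ioi 0, (x ^ 2)⁻¹ • g x⁻¹ = ∫ t in Ioi 0, g t := by
  rw [← integral_comp_rpow_Ioi g (p := -1) (by norm_num)]
  refine setIntegral_congr_fun measurableSet_Ioi fun x (hx : 0 < x) => ?_
  have hpow : x ^ (-1 - 1 : ℝ) = (x ^ 2)⁻¹ := by
    rw [← Real.rpow_natCast, ← Real.rpow_neg hx.le]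
    norm_num
  simp only [hpow, Real.rpow_neg_one, abs_neg, abs_one, one_mul]

section Strip

variable {E : Type*} [NormedAddCommGroup E] [CompleteSpace E] {g : ℂ → E} {a b : ℝ}

lemma tendsto_intervalIntegral_vertical [NormedSpace ℝ E] {l : Filter ℝ}
    [l.IsCountablyGenerated] {c : E} (hab : a ≤ b) (hg : ContinuousOn g (im ⁻¹' Icc a b))
    (hl : Tendsto g (comap re l ⊓ 𝓟 (im ⁻¹' Icc a b)) (𝓝 c)) :
    Tendsto (fun x : ℝ => ∫ y in a..b, g (x + y * I)) l (𝓝 ((b - a) • c)) := by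
  have hmem (x : ℝ) {y : ℝ} (hy : y ∈ Icc a b) : (x + y * I : ℂ) ∈ im ⁻¹' Icc a b := by simpa
  rw [← intervalIntegral.integral_const]
  apply intervalIntegral.tendsto_integral_filter_of_dominated_convergence (fun _ => ‖c‖ + 1)
  · refine Eventually.of_forall fun x => ?_
    rw [uIoc_of_le hab]
    have hline : ContinuousOn (fun y : ℝ => g (x + y * I)) (Icc a b) :=
      hg.comp (by fun_prop) fun y hy => hmem x hy
    exact (hline.mono Ioc_subset_Icc_self).aestronglyMeasurable measurableSet_Ioc
  · have hbound : ∀ᶠ v in comap re l ⊓ 𝓟 (im ⁻¹' Icc a b), ‖g v‖ < ‖c‖ + 1 :=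
      hl.norm.eventually (gt_mem_nhds (lt_add_one _))
    rw [eventually_inf_principal, eventually_comap] at hbound
    filter_upwards [hbound] with x hx
    refine Eventually.of_forall fun y hy => ?_
    rw [uIoc_of_le hab] at hy
    exact (hx _ (by simp) (hmem x (Ioc_subset_Icc_self hy))).le
  · simp
  · refine Eventually.of_forall fun y hy => hl.comp (tendsto_inf.2 ⟨?_, ?_⟩)
    · rw [tendsto_comap_iff]
      exact tendsto_id.congr fun x => by simp
    · rw [uIoc_of_le hab] at hy
      exact tendsto_principal.2 (Eventually.of_forall fun x => hmem x (Ioc_subset_Icc_self hy))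

lemma tendsto_intervalIntegral_top_sub_bottom [NormedSpace ℂ E] {cl cr : E} (hab : a ≤ b)
    (hg : ContinuousOn g (im ⁻¹' Icc a b)) (hd : DifferentiableOn ℂ g (im ⁻¹' Ioo a b))
    (hl : Tendsto g (comap re atBot ⊓ 𝓟 (im ⁻¹' Icc a b)) (𝓝 cl))
    (hr : Tendsto g (comap re atTop ⊓ 𝓟 (im ⁻¹' Icc a b)) (𝓝 cr)) :
    Tendsto (fun R : ℝ => (∫ x in -R..R, g (x + b * I)) - ∫ x in -R..R, g (x + a * I)) atTop
      (𝓝 (I • (b - a) • (cr - cl))) := by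
  have hsides := ((tendsto_intervalIntegral_vertical hab hg hr).sub
    ((tendsto_intervalIntegral_vertical hab hg hl).comp tendsto_neg_atTop_atBot)).const_smul I
  rw [← smul_sub] at hsides
  refine hsides.congr fun R => ?_
  have hrect := integral_boundary_rect_eq_zero_of_continuousOn_of_differentiableOn g
    (⟨-R, a⟩ : ℂ) ⟨R, b⟩
    (hg.mono fun v hv => by simpa only [uIcc_of_le hab] using hv.2)
    (hd.mono fun v hv => by simpa only [min_eq_left hab, max_eq_right hab] using hv.2)
  simp only [Function.comp_apply, smul_sub]
  rw [← sub_eq_zero, ← hrect]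
  abel

end Strip

section Stieltjes

lemma mapsTo_exp_closedStrip : MapsTo exp (im ⁻¹' Icc 0 π) {z | 0 ≤ z.im} := fun v hv => by
  simpa only [mem_ofPred_eq, exp_im] using
    mul_nonneg (Real.exp_pos _).le (Real.sin_nonneg_of_nonneg_of_le_pi hv.1 hv.2)

lemma mapsTo_exp_openStrip : MapsTo exp (im ⁻¹' Ioo 0 π) {z | 0 < z.im} := fun v hv => by
  simpa only [mem_ofPred_eq, exp_im] using
    mul_pos (Real.exp_pos _) (Real.sin_pos_of_pos_of_lt_pi hv.1 hv.2)

variable {H : ℂ → ℂ} {l : ℝ} {c : ℂ}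

/-- The function `(H z - H l) * z / (z - l)` in the logarithmic coordinate `z = exp v`, with the
singularity at `z = l` removed. Integrating it around the strip `0 ≤ im v ≤ π` recovers `H l` from
the boundary values of `H` on the negative axis. -/
noncomputable def stieltjesIntegrand (H : ℂ → ℂ) (l : ℝ) (v : ℂ) : ℂ :=
  dslope H l (exp v) * exp v

lemma stieltjesIntegrand_of_ne {v : ℂ} (hv : exp v ≠ l) :
    stieltjesIntegrand H l v = (H (exp v) - H l) * (exp v / (exp v - l)) := by
  rw [stieltjesIntegrand, dslope_of_ne _ hv, slope_def_field]
  ring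

lemma stieltjesIntegrand_zero (v : ℂ) : stieltjesIntegrand H 0 v = H (exp v) - H 0 := by
  rw [stieltjesIntegrand_of_ne (by simp)]
  simp

lemma continuousOn_dslope_upperHalfPlane (hc : ContinuousOn H {z | 0 ≤ z.im})
    (hd : l ≠ 0 → DifferentiableAt ℂ H l) :
    ContinuousOn (dslope H l) ({z | 0 ≤ z.im} \ {0}) := by
  rintro z ⟨hz, hz0⟩
  by_cases hzl : z = l
  · subst hzl
    exact (continuousAt_dslope_same.2 (hd (by simpa using hz0))).continuousWithinAt
  · exact (continuousWithinAt_dslope_of_ne hzl).2 ((hc z hz).mono sdiff_subset)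

lemma continuousOn_stieltjesIntegrand (hc : ContinuousOn H {z | 0 ≤ z.im})
    (hd : l ≠ 0 → DifferentiableAt ℂ H l) :
    ContinuousOn (stieltjesIntegrand H l) (im ⁻¹' Icc 0 π) :=
  ((continuousOn_dslope_upperHalfPlane hc hd).comp continuous_exp.continuousOn fun v hv =>
    ⟨mapsTo_exp_closedStrip hv, exp_ne_zero v⟩).mul continuous_exp.continuousOn

lemma differentiableOn_stieltjesIntegrand (hd : DifferentiableOn ℂ H {z | 0 < z.im}) :
    DifferentiableOn ℂ (stieltjesIntegrand H l) (im ⁻¹' Ioo 0 π) := by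
  intro v hv
  have him : 0 < (exp v).im := mapsTo_exp_openStrip hv
  have hne : exp v ≠ l := fun h => by simp [h] at him
  have hslope : DifferentiableAt ℂ (dslope H l) (exp v) :=
    (differentiableAt_dslope_of_ne hne).2
      (hd.differentiableAt ((isOpen_lt continuous_const continuous_im).mem_nhds him))
  exact ((hslope.comp v differentiableAt_exp).mul differentiableAt_exp).differentiableWithinAt

lemma tendsto_stieltjesIntegrand_left (hc : ContinuousOn H {z | 0 ≤ z.im}) :
    Tendsto (stieltjesIntegrand H l) (comap re atBot ⊓ 𝓟 (im ⁻¹' Icc 0 π)) (𝓝 0) := by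
  have hexp : Tendsto exp (comap re atBot ⊓ 𝓟 (im ⁻¹' Icc 0 π)) (𝓝[{z | 0 ≤ z.im}] 0) :=
    tendsto_exp_comap_re_atBot.inf (tendsto_principal_principal.2 mapsTo_exp_closedStrip)
  have hH : ContinuousWithinAt H {z | 0 ≤ z.im} 0 := hc 0 (by simp)
  rcases eq_or_ne l 0 with rfl | hl
  · have h := (hH.tendsto.comp hexp).sub_const (H 0)
    rw [sub_self] at h
    exact h.congr fun v => (stieltjesIntegrand_zero v).symm
  · have hslope : ContinuousWithinAt (dslope H l) {z | 0 ≤ z.im} 0 :=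
      (continuousWithinAt_dslope_of_ne (by exact_mod_cast hl.symm)).2 hH
    have h := (hslope.tendsto.mul continuousWithinAt_id.tendsto).comp hexp
    rwa [id, mul_zero] at h

lemma tendsto_stieltjesIntegrand_right (hinf : Tendsto H (cobounded ℂ ⊓ 𝓟 {z | 0 ≤ z.im}) (𝓝 c)) :
    Tendsto (stieltjesIntegrand H l) (comap re atTop ⊓ 𝓟 (im ⁻¹' Icc 0 π)) (𝓝 (c - H l)) := by
  have hexp : Tendsto exp (comap re atTop ⊓ 𝓟 (im ⁻¹' Icc 0 π)) (cobounded ℂ) :=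
    tendsto_exp_comap_re_atTop.mono_left inf_le_left
  have hexp' : Tendsto exp (comap re atTop ⊓ 𝓟 (im ⁻¹' Icc 0 π))
      (cobounded ℂ ⊓ 𝓟 {z | 0 ≤ z.im}) :=
    tendsto_exp_comap_re_atTop.inf (tendsto_principal_principal.2 mapsTo_exp_closedStrip)
  have hratio : Tendsto (fun z : ℂ => (1 - l * z⁻¹)⁻¹) (cobounded ℂ) (𝓝 1) := by
    simpa using ((tendsto_inv₀_cobounded.const_mul (l : ℂ)).const_sub 1).inv₀ (by simp)
  have h := ((hinf.comp hexp').sub_const (H l)).mul (hratio.comp hexp)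
  rw [mul_one] at h
  refine h.congr' ?_
  filter_upwards [hexp.eventually (eventually_ne_cobounded (l : ℂ))] with v hv
  rw [stieltjesIntegrand_of_ne hv]
  simp only [Function.comp_apply]
  congr 1
  field_simp [exp_ne_zero v, sub_ne_zero.2 hv]

lemma stieltjesIntegrand_im_bottom (hre : ∀ x : ℝ, 0 ≤ x → (H x).im = 0) (hl : 0 ≤ l) {u : ℝ}
    (hu : u ≠ Real.log l) : (stieltjesIntegrand H l u).im = 0 := by
  have hne : exp u ≠ l := by
    rw [← ofReal_exp]
    exact_mod_cast fun h : Real.exp u = l => hu (by rw [← h, Real.log_exp])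
  rw [stieltjesIntegrand_of_ne hne, ← ofReal_exp, ← ofReal_sub, ← ofReal_div, im_mul_ofReal,
    sub_im, hre _ (Real.exp_pos u).le, hre l hl, sub_zero, zero_mul]

lemma stieltjesIntegrand_im_top (hre : (H l).im = 0) (hl : 0 ≤ l) (u : ℝ) :
    (stieltjesIntegrand H l (u + π * I)).im =
      (H (-(Real.exp u : ℝ))).im * (Real.exp u / (Real.exp u + l)) := by
  have hexp : exp (u + π * I) = ((-Real.exp u : ℝ) : ℂ) := by
    rw [exp_add, exp_pi_mul_I]
    simp
  have hne : -Real.exp u ≠ l := (by linarith [Real.exp_pos u] : -Real.exp u < l).ne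
  rw [stieltjesIntegrand_of_ne (by rw [hexp]; exact_mod_cast hne), hexp, ← ofReal_sub,
    ← ofReal_div, im_mul_ofReal, sub_im, hre, sub_zero, ← neg_div_neg_eq, neg_neg,
    neg_sub, sub_neg_eq_add, add_comm l, ofReal_neg]

lemma tendsto_intervalIntegral_im_neg_exp (hl : 0 ≤ l) (hc : ContinuousOn H {z | 0 ≤ z.im})
    (hd : DifferentiableOn ℂ H {z | 0 < z.im}) (hdl : l ≠ 0 → DifferentiableAt ℂ H l)
    (hre : ∀ x : ℝ, 0 ≤ x → (H x).im = 0)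
    (hinf : Tendsto H (cobounded ℂ ⊓ 𝓟 {z | 0 ≤ z.im}) (𝓝 c)) :
    Tendsto (fun R : ℝ => ∫ u in -R..R,
      (H (-(Real.exp u : ℝ))).im * (Real.exp u / (Real.exp u + l))) atTop
      (𝓝 (π * (c.re - (H l).re))) := by
  have hg := continuousOn_stieltjesIntegrand hc hdl
  have hlim := (continuous_im.tendsto _).comp
    (tendsto_intervalIntegral_top_sub_bottom Real.pi_pos.le hg
      (differentiableOn_stieltjesIntegrand hd) (tendsto_stieltjesIntegrand_left hc)
      (tendsto_stieltjesIntegrand_right hinf))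
  have him {y : ℝ} (hy : y ∈ Icc 0 π) (R : ℝ) :
      (∫ u in -R..R, stieltjesIntegrand H l (u + y * I)).im =
        ∫ u in -R..R, (stieltjesIntegrand H l (u + y * I)).im := by
    have hline : Continuous fun u : ℝ => stieltjesIntegrand H l (u + y * I) :=
      hg.comp_continuous (by fun_prop) fun u => by simpa using hy
    exact (imCLM.intervalIntegral_comp_comm (hline.intervalIntegrable _ _)).symm
  have hbottom (R : ℝ) : ∫ u in -R..R, (stieltjesIntegrand H l (u + (0 : ℝ) * I)).im = 0 := by
    apply intervalIntegral.integral_zero_ae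
    filter_upwards [Measure.ae_ne volume (Real.log l)] with u hu _
    simpa using stieltjesIntegrand_im_bottom hre hl hu
  have hvalue : (I • (π - 0) • (c - H l - 0)).im = π * (c.re - (H l).re) := by simp
  rw [hvalue] at hlim
  refine hlim.congr fun R => ?_
  rw [Function.comp_apply, sub_im, him (right_mem_Icc.2 Real.pi_pos.le),
    him (left_mem_Icc.2 Real.pi_pos.le), hbottom, sub_zero]
  simp only [stieltjesIntegrand_im_top (hre l hl) hl]

theorem integral_neg_im_div_add_eq (hl : 0 ≤ l) (hc : ContinuousOn H {z | 0 ≤ z.im})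
    (hd : DifferentiableOn ℂ H {z | 0 < z.im}) (hdl : l ≠ 0 → DifferentiableAt ℂ H l)
    (hre : ∀ x : ℝ, 0 ≤ x → (H x).im = 0)
    (hinf : Tendsto H (cobounded ℂ ⊓ 𝓟 {z | 0 ≤ z.im}) (𝓝 c))
    (hneg : ∀ t : ℝ, 0 < t → (H (-t)).im ≤ 0) :
    ∫ t : ℝ in Ioi 0, -(H (-t)).im / (t + l) = π * ((H l).re - c.re) := by
  rw [← integral_exp_smul_comp_exp]
  have hpos (u : ℝ) : 0 < Real.exp u + l := by linarith [Real.exp_pos u]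
  have hcont : Continuous fun u : ℝ =>
      Real.exp u • (-(H (-(Real.exp u : ℝ))).im / (Real.exp u + l)) := by
    have hH : Continuous fun u : ℝ => H (-(Real.exp u : ℝ)) :=
      hc.comp_continuous (by fun_prop) fun u => by simp
    exact Real.continuous_exp.smul
      ((continuous_im.comp hH).neg.div (by fun_prop) fun u => (hpos u).ne')
  refine AECover.integral_eq_of_tendsto_of_nonneg_ae
    (aecover_Ioc tendsto_neg_atTop_atBot tendsto_id) _ (ae_of_all _ fun u => ?_)
    (fun R => hcont.integrableOn_Ioc) ?_
  · exact mul_nonneg (Real.exp_pos u).le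
      (div_nonneg (neg_nonneg.2 (hneg _ (Real.exp_pos u))) (hpos u).le)
  · have hlim := (tendsto_intervalIntegral_im_neg_exp hl hc hd hdl hre hinf).neg
    rw [← mul_neg, neg_sub] at hlim
    refine hlim.congr' ?_
    filter_upwards [eventually_ge_atTop 0] with R hR
    rw [id, ← intervalIntegral.integral_of_le (neg_le_self hR), ← intervalIntegral.integral_neg]
    congr! 2 with u
    rw [smul_eq_mul]
    ring

end Stieltjes

section Power

variable {α : ℝ}

lemma continuousOn_cpow_const_upperHalfPlane (hα : 0 < α) :
    ContinuousOn (fun z : ℂ => z ^ (α : ℂ)) {z | 0 ≤ z.im} := by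
  intro z hz
  rcases eq_or_ne z 0 with rfl | hz0
  · exact (continuousAt_cpow_const_of_re_pos (Or.inl le_rfl) (by simpa)).continuousWithinAt
  have hlog : ContinuousWithinAt log {z | 0 ≤ z.im} z := by
    by_cases hslit : z ∈ slitPlane
    · exact (continuousAt_clog hslit).continuousWithinAt
    · rw [mem_slitPlane_iff, not_or, not_lt, not_not] at hslit
      exact continuousWithinAt_log_of_re_neg_of_im_zero
        (hslit.1.lt_of_ne fun h => hz0 (Complex.ext h hslit.2)) hslit.2
  refine ((hlog.mul_const (α : ℂ)).cexp).congr_of_eventuallyEq ?_ (cpow_def_of_ne_zero hz0 _)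
  filter_upwards [mem_nhdsWithin_of_mem_nhds (isOpen_ne.mem_nhds hz0)] with w hw
  exact cpow_def_of_ne_zero hw _

lemma arg_add_ofReal_lt {z : ℂ} {r : ℝ} (hz : 0 < z.im) (hr : 0 < r) : (z + r).arg < z.arg := by
  by_contra! h
  have hsin : ‖z + r‖ * ‖z‖ * Real.sin ((z + r).arg - z.arg) = -(r * z.im) := by
    calc ‖z + r‖ * ‖z‖ * Real.sin ((z + r).arg - z.arg)
        = ‖z + r‖ * Real.sin (z + r).arg * (‖z‖ * Real.cos z.arg)
          - ‖z + r‖ * Real.cos (z + r).arg * (‖z‖ * Real.sin z.arg) := by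
          rw [Real.sin_sub]
          ring
      _ = -(r * z.im) := by
          simp only [norm_mul_sin_arg, norm_mul_cos_arg, add_re, add_im, ofReal_re, ofReal_im]
          ring
  have hsin_nonneg : 0 ≤ Real.sin ((z + r).arg - z.arg) :=
    Real.sin_nonneg_of_nonneg_of_le_pi (sub_nonneg.2 h)
      (by linarith [arg_le_pi (z + r), arg_nonneg_iff.2 hz.le])
  have hleft : 0 ≤ ‖z + r‖ * ‖z‖ * Real.sin ((z + r).arg - z.arg) := by positivity
  linarith [mul_pos hr hz]

lemma ofReal_neg_cpow_ofReal {t : ℝ} (ht : 0 ≤ t) :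
    (-(t : ℂ)) ^ (α : ℂ) = (t ^ α : ℝ) * exp ((π * α : ℝ) * I) := by
  rw [← ofReal_neg, ofReal_cpow_of_nonpos (neg_nonpos.2 ht), ofReal_neg, neg_neg,
    ← ofReal_cpow ht, ofReal_mul, mul_right_comm]

lemma arg_cpow_ofReal {z : ℂ} (hz : z ≠ 0) (hα : 0 ≤ α) (hα1 : α ≤ 1) :
    (z ^ (α : ℂ)).arg = z.arg * α := by
  have hmem : z.arg * α ∈ Ioc (-π) π := by
    constructor <;> nlinarith [neg_pi_lt_arg z, arg_le_pi z, Real.pi_pos]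
  rw [cpow_ofReal, ofReal_cos, ofReal_sin,
    arg_mul_cos_add_sin_mul_I (Real.rpow_pos_of_pos (norm_pos_iff.2 hz) α) hmem]

end Power

section PowIncrement

variable {α : ℝ}

/-- The analytic continuation to the closed upper half-plane of
`λ ↦ (1 + λ) ^ α - λ ^ α = exp (-(1 - α) * ψ λ)`, where `ψ` is the Lévy exponent of `1 / 𝔾_α`. On
the negative axis the principal powers give the boundary values from above. -/
noncomputable def powIncrement (α : ℝ) (z : ℂ) : ℂ := (1 + z) ^ (α : ℂ) - z ^ (α : ℂ)

lemma powIncrement_ofReal {x : ℝ} (hx : 0 ≤ x) :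
    powIncrement α x = ((1 + x) ^ α - x ^ α : ℝ) := by
  rw [powIncrement, ofReal_sub, ofReal_cpow hx, ofReal_cpow (add_nonneg zero_le_one hx)]
  push_cast
  rfl

lemma continuousOn_powIncrement (hα : 0 < α) : ContinuousOn (powIncrement α) {z | 0 ≤ z.im} :=
  ((continuousOn_cpow_const_upperHalfPlane hα).comp (by fun_prop) fun z hz => by
    simpa using hz).sub (continuousOn_cpow_const_upperHalfPlane hα)

lemma differentiableAt_powIncrement {z : ℂ} (h : 0 < z.im ∨ 0 < z.re) :
    DifferentiableAt ℂ (powIncrement α) z := by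
  have hz : z ∈ slitPlane := mem_slitPlane_iff.2 (h.symm.imp_right ne_of_gt)
  have hz1 : 1 + z ∈ slitPlane := by
    rw [mem_slitPlane_iff]
    rcases h with h | h
    · exact Or.inr (by simpa using h.ne')
    · exact Or.inl (by simp; linarith)
  exact ((differentiableAt_id.const_add 1).cpow_const hz1).sub (differentiableAt_id.cpow_const hz)

lemma powIncrement_neg_of_le_one {u : ℝ} (hu : 0 ≤ u) (hu1 : u ≤ 1) :
    powIncrement α (-u) = ((1 - u) ^ α : ℝ) - (u ^ α : ℝ) * exp ((π * α : ℝ) * I) := by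
  rw [powIncrement, ofReal_neg_cpow_ofReal hu, ofReal_cpow (sub_nonneg.2 hu1), ← sub_eq_add_neg]
  push_cast
  rfl

lemma powIncrement_neg_of_one_le {t : ℝ} (ht : 1 ≤ t) :
    powIncrement α (-t) = (t ^ α - (t - 1) ^ α : ℝ) * exp ((-(π * (1 - α)) : ℝ) * I) := by
  have hbase : (1 + -t : ℂ) = -((t - 1 : ℝ) : ℂ) := by
    push_cast
    ring
  have hexp : exp ((-(π * (1 - α)) : ℝ) * I) = -exp ((π * α : ℝ) * I) := by
    rw [← exp_sub_pi_mul_I]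
    push_cast
    ring_nf
  rw [powIncrement, hbase, ofReal_neg_cpow_ofReal (sub_nonneg.2 ht),
    ofReal_neg_cpow_ofReal (zero_le_one.trans ht), hexp]
  push_cast
  ring

lemma powIncrement_neg_im_neg {t : ℝ} (hα : 0 < α) (hα1 : α < 1) (ht : 0 < t) :
    (powIncrement α (-t)).im < 0 := by
  rcases le_total t 1 with ht1 | ht1
  · have hsin : 0 < Real.sin (π * α) :=
      Real.sin_pos_of_pos_of_lt_pi (by positivity) (by nlinarith [Real.pi_pos])
    rw [powIncrement_neg_of_le_one ht.le ht1, sub_im, ofReal_im, im_ofReal_mul, exp_ofReal_mul_I_im,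
      zero_sub]
    exact neg_neg_of_pos (mul_pos (Real.rpow_pos_of_pos ht α) hsin)
  · have hlt : (t - 1) ^ α < t ^ α :=
      Real.rpow_lt_rpow (sub_nonneg.2 ht1) (sub_one_lt t) hα
    rw [powIncrement_neg_of_one_le ht1, im_ofReal_mul, exp_ofReal_mul_I_im, Real.sin_neg, mul_neg]
    exact neg_neg_of_pos (mul_pos (sub_pos.2 hlt) (Real.sin_pos_of_pos_of_lt_pi
      (by nlinarith [Real.pi_pos]) (by nlinarith [Real.pi_pos])))

lemma powIncrement_mem_slitPlane_of_im_pos {z : ℂ} (hα : 0 < α) (hα1 : α < 1) (hz : 0 < z.im) :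
    powIncrement α z ∈ slitPlane := by
  -- Adding a nonnegative real lowers the argument, so `z ^ α = (1 + z) ^ α + r` with `r ≥ 0` would
  -- force `α * arg z ≤ α * arg (1 + z)`.
  by_contra hmem
  have hz0 : z ≠ 0 := fun h => by simp [h] at hz
  have him1 : 0 < (1 + z).im := by simpa using hz
  have hz1 : 1 + z ≠ 0 := fun h => by simp [h] at him1
  obtain ⟨hre, him⟩ : (powIncrement α z).re ≤ 0 ∧ (powIncrement α z).im = 0 := by
    simpa only [mem_slitPlane_iff, not_or, not_lt, not_not] using hmem
  obtain ⟨r, hr, hpow⟩ : ∃ r : ℝ, 0 ≤ r ∧ z ^ (α : ℂ) = (1 + z) ^ (α : ℂ) + r := by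
    refine ⟨-(powIncrement α z).re, neg_nonneg.2 hre, ?_⟩
    have h : powIncrement α z = (powIncrement α z).re := Complex.ext rfl (by simpa using him)
    rw [ofReal_neg, ← h, powIncrement]
    ring
  have hpow_im : 0 < ((1 + z) ^ (α : ℂ)).im := by
    have harg : 0 < (1 + z).arg :=
      (arg_nonneg_iff.2 him1.le).lt_of_ne fun h => him1.ne' (arg_eq_zero_iff.1 h.symm).2
    rw [cpow_ofReal_im]
    exact mul_pos (Real.rpow_pos_of_pos (norm_pos_iff.2 hz1) α) (Real.sin_pos_of_pos_of_lt_pi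
      (by positivity) (by nlinarith [arg_le_pi (1 + z)]))
  have hle : z.arg * α ≤ (1 + z).arg * α := by
    rw [← arg_cpow_ofReal hz0 hα.le hα1.le, ← arg_cpow_ofReal hz1 hα.le hα1.le, hpow]
    rcases hr.eq_or_lt with rfl | hr
    · rw [ofReal_zero, add_zero]
    · exact (arg_add_ofReal_lt hpow_im hr).le
  have hlt : (1 + z).arg < z.arg := by
    simpa [add_comm] using arg_add_ofReal_lt hz one_pos
  exact hle.not_gt (mul_lt_mul_of_pos_right hlt hα)

lemma powIncrement_mem_slitPlane {z : ℂ} (hα : 0 < α) (hα1 : α < 1) (hz : 0 ≤ z.im) :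
    powIncrement α z ∈ slitPlane := by
  rcases hz.lt_or_eq with hz | hz
  · exact powIncrement_mem_slitPlane_of_im_pos hα hα1 hz
  obtain ⟨x, rfl⟩ : ∃ x : ℝ, (x : ℂ) = z := ⟨z.re, Complex.ext rfl (by simpa using hz)⟩
  rcases le_or_gt 0 x with hx | hx
  · rw [powIncrement_ofReal hx, ofReal_mem_slitPlane, sub_pos]
    exact Real.rpow_lt_rpow hx (lt_one_add x) hα
  · have him := powIncrement_neg_im_neg hα hα1 (neg_pos.2 hx)
    rw [ofReal_neg, neg_neg] at him
    exact mem_slitPlane_iff.2 (Or.inr him.ne)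

lemma one_add_cpow_eq_cpow_mul {z : ℂ} (hz : 0 ≤ z.im) (hz1 : 1 < ‖z‖) (w : ℂ) :
    (1 + z) ^ w = z ^ w * (1 + z⁻¹) ^ w := by
  have hz0 : z ≠ 0 := fun h => by simp [h, zero_lt_one.not_gt] at hz1
  have hre : 0 < (1 + z⁻¹).re := by
    have hnorm : ‖z⁻¹‖ < 1 := by
      rw [norm_inv]
      exact inv_lt_one_of_one_lt₀ hz1
    rw [add_re, one_re]
    linarith [neg_abs_le z⁻¹.re, abs_re_le_norm z⁻¹]
  have him : (1 + z⁻¹).im ≤ 0 := by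
    rw [add_im, one_im, zero_add, inv_im]
    exact div_nonpos_of_nonpos_of_nonneg (neg_nonpos.2 hz) (normSq_nonneg z)
  have hne : 1 + z⁻¹ ≠ 0 := fun h => by simp [h] at hre
  have harg : (1 + z⁻¹).arg ≤ 0 := by
    rcases him.lt_or_eq with him | him
    · exact (arg_neg_iff.2 him).le
    · exact (arg_eq_zero_iff.2 ⟨hre.le, him⟩).le
  have hlog : log (z * (1 + z⁻¹)) = log z + log (1 + z⁻¹) :=
    log_mul hz0 hne
      ⟨by linarith [arg_nonneg_iff.2 hz, (abs_lt.1 (abs_arg_lt_pi_div_two_iff.2 (Or.inl hre))).1,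
        Real.pi_pos], by linarith [arg_le_pi z]⟩
  have hmul : 1 + z = z * (1 + z⁻¹) := by
    rw [mul_add, mul_one, mul_inv_cancel₀ hz0, add_comm]
  rw [hmul, cpow_def_of_ne_zero (mul_ne_zero hz0 hne), cpow_def_of_ne_zero hz0,
    cpow_def_of_ne_zero hne, hlog, add_mul, exp_add]

lemma isLittleO_one_add_cpow_sub_one (hα1 : α < 1) (w : ℂ) :
    (fun z : ℂ => (1 + z) ^ w - 1) =o[𝓝 0] fun z => ‖z‖ ^ α := by
  have hderiv : HasDerivAt (fun z : ℂ => (1 + z) ^ w) (w * (1 + 0) ^ (w - 1) * 1) 0 :=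
    ((hasDerivAt_id (0 : ℂ)).const_add 1).cpow_const (by simp)
  have hbigO : (fun z : ℂ => (1 + z) ^ w - 1) =O[𝓝 0] fun z => ‖z‖ := by
    simpa using hderiv.isBigO_sub.norm_right
  have hlittleO : (fun z : ℂ => ‖z‖) =o[𝓝 0] fun z => ‖z‖ ^ α := by
    refine Asymptotics.isLittleO_of_tendsto
      (fun z hz => ((Real.rpow_eq_zero_iff_of_nonneg (norm_nonneg z)).1 hz).1) ?_
    have hcont : Continuous fun z : ℂ => ‖z‖ ^ (1 - α) :=
      continuous_norm.rpow_const fun _ => Or.inr (sub_pos.2 hα1).le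
    have hlim := hcont.tendsto 0
    rw [norm_zero, Real.zero_rpow (sub_pos.2 hα1).ne'] at hlim
    refine hlim.congr fun z => ?_
    rw [Real.rpow_sub' (norm_nonneg z) (sub_pos.2 hα1).ne', Real.rpow_one]
  exact hbigO.trans_isLittleO hlittleO

lemma tendsto_powIncrement_cobounded (hα1 : α < 1) :
    Tendsto (powIncrement α) (cobounded ℂ ⊓ 𝓟 {z | 0 ≤ z.im}) (𝓝 0) := by
  rw [tendsto_zero_iff_norm_tendsto_zero]
  have hlim := (((isLittleO_one_add_cpow_sub_one hα1 α).norm_left.tendsto_div_nhds_zero).comp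
    tendsto_inv₀_cobounded).mono_left (inf_le_left (b := 𝓟 {z : ℂ | 0 ≤ z.im}))
  refine hlim.congr' ?_
  filter_upwards [mem_inf_of_left (tendsto_norm_cobounded_atTop.eventually_gt_atTop 1),
    mem_inf_of_right (mem_principal_self _)] with z hz1 hz
  rw [powIncrement, one_add_cpow_eq_cpow_mul hz hz1, ← mul_sub_one, norm_mul, norm_cpow_real,
    Function.comp_apply, norm_inv, Real.inv_rpow (norm_nonneg z), div_inv_eq_mul, mul_comm]

end PowIncrement

section Density

variable {α σ : ℝ}

lemma rpow_two_mul {x : ℝ} (hx : 0 ≤ x) (a : ℝ) : x ^ (2 * a) = (x ^ a) ^ 2 := by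
  rw [mul_comm, Real.rpow_mul hx, Real.rpow_two]

lemma rpow_neg_mul_div_sub_one {x : ℝ} (hx : 0 < x) (a b c : ℝ) :
    x ^ (-(a * b / c) - 1) = (x ^ (-b)) ^ (a / c) / x := by
  rw [← Real.rpow_mul hx.le, Real.rpow_sub_one hx.ne']
  ring_nf

lemma normSq_powIncrement_neg {u : ℝ} (hu : 0 ≤ u) (hu1 : u ≤ 1) :
    normSq (powIncrement α (-u)) =
      u ^ (2 * α) - 2 * u ^ α * (1 - u) ^ α * Real.cos (π * α) + (1 - u) ^ (2 * α) := by
  rw [powIncrement_neg_of_le_one hu hu1, normSq_sub, normSq_mul, normSq_eq_norm_sq (exp _),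
    norm_exp_ofReal_mul_I, normSq_ofReal, normSq_ofReal, map_mul, conj_ofReal, ← mul_assoc,
    ← ofReal_mul, re_ofReal_mul, conj_re, exp_ofReal_mul_I_re, rpow_two_mul hu,
    rpow_two_mul (sub_nonneg.2 hu1)]
  ring

lemma bfryDensity_eq_div_normSq {u : ℝ} (hu : 0 ≤ u) (hu1 : u ≤ 1) :
    bfryDensity α u = α * Real.sin (π * α) / ((1 - α) * π) *
      (u ^ (α - 1) * (1 - u) ^ (α - 1) / normSq (powIncrement α (-u))) := by
  rw [normSq_powIncrement_neg hu hu1, bfryDensity]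

lemma bfryDensity_nonneg {u : ℝ} (hα : 0 < α) (hα1 : α < 1) (hu : 0 ≤ u) (hu1 : u ≤ 1) :
    0 ≤ bfryDensity α u := by
  have hsin : 0 ≤ Real.sin (π * α) :=
    Real.sin_nonneg_of_nonneg_of_le_pi (by positivity) (by nlinarith [Real.pi_pos])
  rw [bfryDensity_eq_div_normSq hu hu1]
  exact mul_nonneg
    (div_nonneg (mul_nonneg hα.le hsin) (mul_nonneg (sub_nonneg.2 hα1.le) Real.pi_pos.le))
    (div_nonneg (mul_nonneg (Real.rpow_nonneg hu _) (Real.rpow_nonneg (sub_nonneg.2 hu1) _))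
      (normSq_nonneg _))

lemma hasDerivAt_powIncrement_neg {u : ℝ} (hu : 0 < u) (hu1 : u < 1) :
    HasDerivAt (fun u : ℝ => powIncrement α (-u))
      ((-(α * (1 - u) ^ (α - 1)) : ℝ) - (α * u ^ (α - 1) : ℝ) * exp ((π * α : ℝ) * I)) u := by
  have hone : HasDerivAt (fun u : ℝ => (1 - u) ^ α) (-(α * (1 - u) ^ (α - 1))) u := by
    simpa using ((hasDerivAt_id u).const_sub 1).rpow_const (p := α) (Or.inl (sub_pos.2 hu1).ne')
  have hpow : HasDerivAt (fun u : ℝ => u ^ α) (α * u ^ (α - 1)) u :=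
    Real.hasDerivAt_rpow_const (Or.inl hu.ne')
  refine (hone.ofReal_comp.sub (hpow.ofReal_comp.mul_const _)).congr_of_eventuallyEq ?_
  filter_upwards [Ioo_mem_nhds hu hu1] with v hv
  exact powIncrement_neg_of_le_one hv.1.le hv.2.le

lemma hasDerivAt_neg_arg_powIncrement_neg {u : ℝ} (hα : 0 < α) (hα1 : α < 1) (hu : 0 < u)
    (hu1 : u < 1) :
    HasDerivAt (fun u : ℝ => -(powIncrement α (-u)).arg / (π * (1 - α))) (bfryDensity α u) u := by
  have hslit : powIncrement α (-u) ∈ slitPlane := powIncrement_mem_slitPlane hα hα1 (by simp)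
  have hlog := (hasDerivAt_powIncrement_neg (α := α) hu hu1).clog_real hslit
  have harg := imCLM.hasFDerivAt.comp_hasDerivAt u hlog
  simp only [Function.comp_def, imCLM_apply, log_im] at harg
  refine (harg.neg.div_const (π * (1 - α))).congr_deriv ?_
  have hnormSq : normSq (powIncrement α (-u)) ≠ 0 := normSq_eq_zero.not.2 (slitPlane_ne_zero hslit)
  have hone : (1 - u) ^ α = (1 - u) ^ (α - 1) * (1 - u) := by
    rw [← Real.rpow_add_one (sub_pos.2 hu1).ne', sub_add_cancel]
  have hpow : u ^ α = u ^ (α - 1) * u := by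
    rw [← Real.rpow_add_one hu.ne', sub_add_cancel]
  have hα' : 1 - α ≠ 0 := (sub_pos.2 hα1).ne'
  rw [bfryDensity_eq_div_normSq hu.le hu1.le, div_im]
  generalize normSq (powIncrement α (-u)) = N at hnormSq
  simp only [powIncrement_neg_of_le_one hu.le hu1.le, sub_re, sub_im, re_ofReal_mul, im_ofReal_mul,
    ofReal_re, ofReal_im, exp_ofReal_mul_I_re, exp_ofReal_mul_I_im, hone, hpow]
  field_simp
  ring

lemma arg_powIncrement_neg_of_one_le {t : ℝ} (hα : 0 < α) (hα1 : α < 1) (ht : 1 ≤ t) :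
    (powIncrement α (-t)).arg = -(π * (1 - α)) := by
  have hpos : 0 < t ^ α - (t - 1) ^ α :=
    sub_pos.2 (Real.rpow_lt_rpow (sub_nonneg.2 ht) (sub_one_lt t) hα)
  rw [powIncrement_neg_of_one_le ht, arg_real_mul _ hpos, arg_exp_mul_I,
    toIocMod_eq_self]
  constructor <;> nlinarith [Real.pi_pos]

lemma continuous_arg_powIncrement_neg (hα : 0 < α) (hα1 : α < 1) :
    Continuous fun t : ℝ => (powIncrement α (-t)).arg := by
  have hcont : Continuous fun t : ℝ => powIncrement α (-t) :=
    (continuousOn_powIncrement hα).comp_continuous (by fun_prop) fun t => by simp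
  exact continuous_iff_continuousAt.2 fun t =>
    (continuousAt_arg (powIncrement_mem_slitPlane hα hα1 (by simp))).comp
      (f := fun t : ℝ => powIncrement α (-t)) hcont.continuousAt

lemma bfryCDF_eq_neg_arg_div {y : ℝ} (hα : 0 < α) (hα1 : α < 1) (hy : 0 ≤ y) (hy1 : y ≤ 1) :
    bfryCDF α y = -(powIncrement α (-y)).arg / (π * (1 - α)) := by
  have hcont : ContinuousOn (fun u : ℝ => -(powIncrement α (-u)).arg / (π * (1 - α)))
      (Icc 0 y) :=
    ((continuous_arg_powIncrement_neg hα hα1).neg.div_const _).continuousOn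
  have hderiv : ∀ u ∈ Ioo 0 y,
      HasDerivAt (fun u : ℝ => -(powIncrement α (-u)).arg / (π * (1 - α))) (bfryDensity α u) u :=
    fun u hu => hasDerivAt_neg_arg_powIncrement_neg hα hα1 hu.1 (hu.2.trans_le hy1)
  have hint := intervalIntegral.integrableOn_deriv_of_nonneg hcont hderiv
    fun u hu => bfryDensity_nonneg hα hα1 hu.1.le (hu.2.le.trans hy1)
  have hzero : (powIncrement α (-(0 : ℝ))).arg = 0 := by
    simp [powIncrement, hα.ne']
  rw [bfryCDF, intervalIntegral.integral_eq_sub_of_hasDerivAt_of_le hy hcont hderiv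
    ((intervalIntegrable_iff_integrableOn_Ioc_of_le hy).2 hint), hzero, neg_zero, zero_div,
    sub_zero]

lemma arg_powIncrement_neg_of_le_one {y : ℝ} (hα : 0 < α) (hα1 : α < 1) (hy : 0 ≤ y)
    (hy1 : y ≤ 1) : (powIncrement α (-y)).arg = -(π * (1 - α) * bfryCDF α y) := by
  have hα' : 1 - α ≠ 0 := (sub_pos.2 hα1).ne'
  rw [bfryCDF_eq_neg_arg_div hα hα1 hy hy1]
  field_simp

lemma antitoneOn_arg_powIncrement_neg (hα : 0 < α) (hα1 : α < 1) :
    AntitoneOn (fun u : ℝ => (powIncrement α (-u)).arg) (Icc 0 1) := by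
  have hmono : MonotoneOn (fun u : ℝ => -(powIncrement α (-u)).arg / (π * (1 - α))) (Icc 0 1) := by
    refine monotoneOn_of_hasDerivWithinAt_nonneg (f' := bfryDensity α) (convex_Icc 0 1)
      ((continuous_arg_powIncrement_neg hα hα1).neg.div_const _).continuousOn
      (fun u hu => ?_) fun u hu => ?_
    all_goals rw [interior_Icc] at hu
    · exact (hasDerivAt_neg_arg_powIncrement_neg hα hα1 hu.1 hu.2).hasDerivWithinAt
    · exact bfryDensity_nonneg hα hα1 hu.1.le hu.2.le
  intro u hu v hv huv
  exact neg_le_neg_iff.1 ((div_le_div_iff_of_pos_right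
    (mul_pos Real.pi_pos (sub_pos.2 hα1))).1 (hmono hu hv huv))

lemma arg_powIncrement_neg_mem_Icc {t : ℝ} (hα : 0 < α) (hα1 : α < 1) (ht : 0 < t) :
    (powIncrement α (-t)).arg ∈ Icc (-(π * (1 - α))) 0 := by
  refine ⟨?_, (arg_neg_iff.2 (powIncrement_neg_im_neg hα hα1 ht)).le⟩
  rcases le_total t 1 with ht1 | ht1
  · rw [← arg_powIncrement_neg_of_one_le hα hα1 le_rfl]
    exact antitoneOn_arg_powIncrement_neg hα hα1 ⟨ht.le, ht1⟩ (right_mem_Icc.2 zero_le_one) ht1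
  · exact (arg_powIncrement_neg_of_one_le hα hα1 ht1).ge

lemma norm_powIncrement_neg_inv_of_le_one {x : ℝ} (hα : 0 < α) (hx : 0 < x) (hx1 : x ≤ 1) :
    ‖powIncrement α (-(x⁻¹ : ℝ))‖ = x ^ (-α) * (1 - (1 - x) ^ α) := by
  have hxinv : 1 ≤ x⁻¹ := (one_le_inv₀ hx).2 hx1
  have hdiff : x⁻¹ - 1 = x⁻¹ * (1 - x) := by
    field_simp
  have hnonneg : 0 ≤ (x⁻¹) ^ α - (x⁻¹ - 1) ^ α :=
    sub_nonneg.2 (Real.rpow_le_rpow (sub_nonneg.2 hxinv) (sub_one_lt _).le hα.le)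
  rw [powIncrement_neg_of_one_le hxinv, norm_mul, norm_exp_ofReal_mul_I, mul_one, norm_real,
    Real.norm_of_nonneg hnonneg, hdiff, Real.mul_rpow (by positivity) (sub_nonneg.2 hx1),
    Real.inv_rpow hx.le, Real.rpow_neg hx.le]
  ring

lemma norm_powIncrement_neg_inv_of_one_le {x : ℝ} (hx1 : 1 ≤ x) :
    ‖powIncrement α (-(x⁻¹ : ℝ))‖ = x ^ (-α) *
      ((x - 1) ^ (2 * α) - 2 * (x - 1) ^ α * Real.cos (π * α) + 1) ^ (1 / 2 : ℝ) := by
  have hx : 0 < x := zero_lt_one.trans_le hx1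
  have hx' : 0 ≤ x - 1 := sub_nonneg.2 hx1
  have hdiff : 1 - x⁻¹ = x⁻¹ * (x - 1) := by
    field_simp
  have hnormSq : normSq (powIncrement α (-(x⁻¹ : ℝ))) = (x ^ (-α)) ^ 2 *
      ((x - 1) ^ (2 * α) - 2 * (x - 1) ^ α * Real.cos (π * α) + 1) := by
    rw [normSq_powIncrement_neg (inv_nonneg.2 hx.le) (inv_le_one_of_one_le₀ hx1), hdiff,
      Real.mul_rpow (inv_nonneg.2 hx.le) hx', Real.mul_rpow (inv_nonneg.2 hx.le) hx',
      rpow_two_mul (inv_nonneg.2 hx.le), Real.inv_rpow hx.le, Real.rpow_neg hx.le]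
    ring
  rw [← Real.sqrt_eq_rpow, norm_def, hnormSq, Real.sqrt_mul (sq_nonneg _),
    Real.sqrt_sq (Real.rpow_nonneg hx.le _)]

lemma bfryMeanDensity_eq_of_le_one {x : ℝ} (hα : 0 < α) (hα1 : α < 1) (hx : 0 < x) (hx1 : x ≤ 1) :
    bfryMeanDensity α σ x =
      -(powIncrement α (-(x⁻¹ : ℝ)) ^ ((σ / (1 - α) : ℝ) : ℂ)).im / (π * x) := by
  have hα' : 1 - α ≠ 0 := (sub_pos.2 hα1).ne'
  have harg : (powIncrement α (-(x⁻¹ : ℝ))).arg * (σ / (1 - α)) = -(π * σ) := by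
    rw [arg_powIncrement_neg_of_one_le hα hα1 ((one_le_inv₀ hx).2 hx1)]
    field_simp
  have hbase : 0 ≤ 1 - (1 - x) ^ α :=
    sub_nonneg.2 (Real.rpow_le_one (sub_nonneg.2 hx1) (sub_le_self 1 hx.le) hα.le)
  rw [bfryMeanDensity, if_pos hx1, cpow_ofReal_im, harg, Real.sin_neg, mul_neg, neg_neg,
    norm_powIncrement_neg_inv_of_le_one hα hx hx1, Real.mul_rpow (Real.rpow_nonneg hx.le _) hbase,
    rpow_neg_mul_div_sub_one hx]
  field_simp

lemma bfryMeanDensity_eq_of_one_lt {x : ℝ} (hα : 0 < α) (hα1 : α < 1) (hx1 : 1 < x) :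
    bfryMeanDensity α σ x =
      -(powIncrement α (-(x⁻¹ : ℝ)) ^ ((σ / (1 - α) : ℝ) : ℂ)).im / (π * x) := by
  have hx : 0 < x := zero_lt_one.trans hx1
  have hα' : 1 - α ≠ 0 := (sub_pos.2 hα1).ne'
  have harg : (powIncrement α (-(x⁻¹ : ℝ))).arg * (σ / (1 - α)) = -(π * σ * bfryCDF α x⁻¹) := by
    rw [arg_powIncrement_neg_of_le_one hα hα1 (inv_nonneg.2 hx.le) (inv_le_one_of_one_le₀ hx1.le)]
    field_simp
  have hbase : 0 ≤ (x - 1) ^ (2 * α) - 2 * (x - 1) ^ α * Real.cos (π * α) + 1 := by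
    rw [rpow_two_mul (sub_nonneg.2 hx1.le)]
    nlinarith [sq_nonneg ((x - 1) ^ α - Real.cos (π * α)), Real.cos_sq_le_one (π * α)]
  have hexp : σ / (2 * (1 - α)) = 1 / 2 * (σ / (1 - α)) := by
    field_simp
  rw [bfryMeanDensity, if_neg hx1.not_ge, cpow_ofReal_im, harg, Real.sin_neg, mul_neg, neg_neg,
    norm_powIncrement_neg_inv_of_one_le hx1.le,
    Real.mul_rpow (Real.rpow_nonneg hx.le _) (Real.rpow_nonneg hbase _), ← Real.rpow_mul hbase,
    rpow_neg_mul_div_sub_one hx, one_div x, hexp]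
  field_simp

lemma bfryMeanDensity_eq {x : ℝ} (hα : 0 < α) (hα1 : α < 1) (hx : 0 < x) :
    bfryMeanDensity α σ x =
      -(powIncrement α (-(x⁻¹ : ℝ)) ^ ((σ / (1 - α) : ℝ) : ℂ)).im / (π * x) :=
  (le_or_gt x 1).elim (bfryMeanDensity_eq_of_le_one hα hα1 hx) (bfryMeanDensity_eq_of_one_lt hα hα1)

lemma powIncrement_neg_cpow_im_nonpos {t : ℝ} (hα : 0 < α) (hα1 : α < 1) (hσ : 0 ≤ σ)
    (hσ1 : σ ≤ 1) (ht : 0 < t) :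
    (powIncrement α (-t) ^ ((σ / (1 - α) : ℝ) : ℂ)).im ≤ 0 := by
  obtain ⟨hlower, hupper⟩ := arg_powIncrement_neg_mem_Icc hα hα1 ht
  have hα' : 0 < 1 - α := sub_pos.2 hα1
  have hs : 0 ≤ σ / (1 - α) := div_nonneg hσ hα'.le
  have hbound : -π ≤ (powIncrement α (-t)).arg * (σ / (1 - α)) :=
    calc -π ≤ -(π * σ) := neg_le_neg (mul_le_of_le_one_right Real.pi_pos.le hσ1)
      _ = -(π * (1 - α)) * (σ / (1 - α)) := by
        field_simp
      _ ≤ _ := mul_le_mul_of_nonneg_right hlower hs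
  rw [cpow_ofReal_im]
  exact mul_nonpos_of_nonneg_of_nonpos (Real.rpow_nonneg (norm_nonneg _) _)
    (Real.sin_nonpos_of_nonpos_of_neg_pi_le (mul_nonpos_of_nonpos_of_nonneg hupper hs) hbound)

end Density

section Transform

variable {α σ s l : ℝ}

lemma powIncrement_ofReal_cpow {x : ℝ} (hα : 0 < α) (hx : 0 ≤ x) :
    powIncrement α x ^ (s : ℂ) = (((1 + x) ^ α - x ^ α) ^ s : ℝ) := by
  rw [powIncrement_ofReal hx, ofReal_cpow
    (sub_nonneg.2 (Real.rpow_le_rpow hx (lt_one_add x).le hα.le))]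

lemma tendsto_powIncrement_cpow_cobounded (hα1 : α < 1) (hs : 0 < s) :
    Tendsto (fun z => powIncrement α z ^ (s : ℂ)) (cobounded ℂ ⊓ 𝓟 {z | 0 ≤ z.im}) (𝓝 0) := by
  have hcont : ContinuousAt (fun z : ℂ => z ^ (s : ℂ)) 0 :=
    continuousAt_cpow_const_of_re_pos (Or.inl le_rfl) (by simpa)
  have hzero : (0 : ℂ) ^ (s : ℂ) = 0 := zero_cpow (ofReal_ne_zero.2 hs.ne')
  have hlim := hcont.tendsto.comp (tendsto_powIncrement_cobounded hα1)
  rwa [hzero] at hlim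

lemma integral_neg_im_powIncrement_cpow_div_add (hα : 0 < α) (hα1 : α < 1) (hσ : 0 < σ)
    (hσ1 : σ ≤ 1) (hl : 0 ≤ l) :
    ∫ t : ℝ in Ioi 0, -(powIncrement α (-t) ^ ((σ / (1 - α) : ℝ) : ℂ)).im / (t + l) =
      π * ((1 + l) ^ α - l ^ α) ^ (σ / (1 - α)) := by
  have hdiff {z : ℂ} (hz : 0 ≤ z.im) (h : 0 < z.im ∨ 0 < z.re) :
      DifferentiableAt ℂ (fun z => powIncrement α z ^ ((σ / (1 - α) : ℝ) : ℂ)) z :=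
    (differentiableAt_powIncrement h).cpow_const (powIncrement_mem_slitPlane hα hα1 hz)
  rw [integral_neg_im_div_add_eq hl
    ((continuousOn_powIncrement hα).cpow_const fun z hz => powIncrement_mem_slitPlane hα hα1 hz)
    (fun z hz => (hdiff (le_of_lt hz) (Or.inl hz)).differentiableWithinAt)
    (fun hl0 => hdiff (by simp) (Or.inr (by simpa using hl.lt_of_ne' hl0)))
    (fun x hx => by rw [powIncrement_ofReal_cpow hα hx, ofReal_im])
    (tendsto_powIncrement_cpow_cobounded hα1 (div_pos hσ (sub_pos.2 hα1)))
    (fun t ht => powIncrement_neg_cpow_im_nonpos hα hα1 hσ.le hσ1 ht),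
    powIncrement_ofReal_cpow hα hl, ofReal_re, zero_re, sub_zero]

lemma bfryMeanDensity_nonneg {x : ℝ} (hα : 0 < α) (hα1 : α < 1) (hσ : 0 ≤ σ) (hσ1 : σ ≤ 1)
    (hx : 0 < x) : 0 ≤ bfryMeanDensity α σ x := by
  rw [bfryMeanDensity_eq hα hα1 hx]
  exact div_nonneg
    (neg_nonneg.2 (powIncrement_neg_cpow_im_nonpos hα hα1 hσ hσ1 (inv_pos.2 hx)))
    (mul_pos Real.pi_pos hx).le

theorem integral_bfryMeanDensity_mul_inv (hα : 0 < α) (hα1 : α < 1) (hσ : 0 < σ) (hσ1 : σ ≤ 1)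
    (hl : 0 ≤ l) :
    ∫ x in Ioi (0 : ℝ), bfryMeanDensity α σ x * (1 + l * x)⁻¹ =
      ((1 + l) ^ α - l ^ α) ^ (σ / (1 - α)) := by
  have hsubst : ∀ x ∈ Ioi (0 : ℝ), bfryMeanDensity α σ x * (1 + l * x)⁻¹ =
      π⁻¹ * ((x ^ 2)⁻¹ •
        (-(powIncrement α (-(x⁻¹ : ℝ)) ^ ((σ / (1 - α) : ℝ) : ℂ)).im / (x⁻¹ + l))) := by
    intro x (hx : 0 < x)
    have hinv : x⁻¹ + l = (1 + l * x) / x := by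
      field_simp
    rw [bfryMeanDensity_eq hα hα1 hx, hinv, smul_eq_mul]
    field_simp
  rw [setIntegral_congr_fun measurableSet_Ioi hsubst, integral_const_mul,
    integral_inv_sq_smul_comp_inv_Ioi
      (fun t => -(powIncrement α (-t) ^ ((σ / (1 - α) : ℝ) : ℂ)).im / (t + l)),
    integral_neg_im_powIncrement_cpow_div_add hα hα1 hσ hσ1 hl,
    inv_mul_cancel_left₀ Real.pi_pos.ne']

end Transform

/-- Proposition 5.2: `f_{α,σ}` is a probability density on `(0,∞)`
and for every `λ ≥ 0`, `∫₀^∞ f_{α,σ}(x)·(1+λx)^{−1} dx = ((1+λ)^α − λ^α)^{σ/(1−α)}`. -/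
theorem bfry_mean_density
    (α σ : ℝ) (hα0 : 0 < α) (hα1 : α < 1) (hσ0 : 0 < σ) (hσ1 : σ ≤ 1) :
    (∀ x ∈ Set.Ioi (0:ℝ), 0 ≤ bfryMeanDensity α σ x) ∧
    (∫ x in Set.Ioi (0:ℝ), bfryMeanDensity α σ x = 1) ∧
    (∀ l : ℝ, 0 ≤ l →
      ∫ x in Set.Ioi (0:ℝ), bfryMeanDensity α σ x * (1 + l * x)⁻¹
        = ((1 + l) ^ α - l ^ α) ^ (σ / (1 - α))) := by
  have htransform {l : ℝ} (hl : 0 ≤ l) := integral_bfryMeanDensity_mul_inv hα0 hα1 hσ0 hσ1 hl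
  refine ⟨fun x hx => bfryMeanDensity_nonneg hα0 hα1 hσ0.le hσ1 hx, ?_, fun l hl => htransform hl⟩
  simpa [Real.zero_rpow hα0.ne'] using htransform le_rfl
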